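/- arXiv:2205.00881 — 2 statements merged into one kernel-verified Lean document; each statement's English description precedes it below -/
import Mathlib

section
/- Majority dynamics preserves MajDom-consensus identity: if a is the MajDom-consensus alternative of a profile P, then for every update order σ, a is the MajDom-consensus alternative of MD_σ(P). -/
attribute [local instance] Classical.propDecidable

noncomputable section

/-- A preference over the set of alternatives `A`: a binary relation. -/
abbrev Pref (A : Type) := A → A → Prop

/-- A preference is a strict partial order: irreflexive and transitive. -/
def IsPref {A : Type} (pref : Pref A) : Prop :=
  Irreflexive pref ∧ Transitive pref

variable {A : Type} [Fintype A] [DecidableEq A]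

/-- The support `n_P(ab)`: the number of agents preferring `a` to `b` in profile `P`. -/
def support {n : ℕ} (P : Fin n → Pref A) (a b : A) : ℕ :=
  (Finset.univ.filter fun i => P i a b).card

/-- An update order: a list of ordered pairs of distinct alternatives containing,
for each unordered pair `{a, b}` of distinct alternatives, exactly one of `ab` or `ba`,
each exactly once. -/
def IsUpdateOrder (σ : List (A × A)) : Prop :=
  (∀ p ∈ σ, p.1 ≠ p.2) ∧
  (∀ a b : A, a ≠ b → σ.count (a, b) + σ.count (b, a) = 1)

/-- One step of majority dynamics, discussing the pair `p`: agents already ranking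
`p.1` versus `p.2` keep their preference; every other agent adds `p.1 ≻ p.2` if
`n_P(p.1 p.2) ≥ n_P(p.2 p.1)` (ties broken in favour of the first alternative of the
pair), and otherwise adds `p.2 ≻ p.1`, then takes the transitive closure. -/
def mdStep {n : ℕ} (P : Fin n → Pref A) (p : A × A) : Fin n → Pref A :=
  fun i =>
    if P i p.1 p.2 ∨ P i p.2 p.1 then P i
    else if support P p.2 p.1 ≤ support P p.1 p.2 then
      Relation.TransGen (fun x y => P i x y ∨ (x = p.1 ∧ y = p.2))
    else
      Relation.TransGen (fun x y => P i x y ∨ (x = p.2 ∧ y = p.1))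

/-- Majority dynamics `MD_σ(P)`: process the pairs of the update order `σ` in order. -/
def MD {n : ℕ} (σ : List (A × A)) (P : Fin n → Pref A) : Fin n → Pref A :=
  σ.foldl mdStep P

/-- `a` is a Condorcet winner in `P`. -/
def CondorcetWinner {n : ℕ} (P : Fin n → Pref A) (a : A) : Prop :=
  ∀ b, b ≠ a → support P b a < support P a b

/-- `a` is a Condorcet loser in `P`. -/
def CondorcetLoser {n : ℕ} (P : Fin n → Pref A) (a : A) : Prop :=
  ∀ b, b ≠ a → support P a b < support P b a

/-- `a` is undominated in a preference. -/
def Undominated {A : Type} (pref : Pref A) (a : A) : Prop := ∀ b, ¬ pref b a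

/-- `a` is dominant in a preference. -/
def Dominant {A : Type} (pref : Pref A) (a : A) : Prop := ∀ b, b ≠ a → pref a b

/-- `a` is dominated (by every other alternative) in a preference. -/
def DominatedIn {A : Type} (pref : Pref A) (a : A) : Prop := ∀ b, b ≠ a → pref b a

/-- Number of preferences of `P` in which `a` is undominated. -/
def udCount {n : ℕ} (P : Fin n → Pref A) (a : A) : ℕ :=
  (Finset.univ.filter fun i => Undominated (P i) a).card

/-- Number of preferences of `P` in which `a` is dominant. -/
def domCount {n : ℕ} (P : Fin n → Pref A) (a : A) : ℕ :=
  (Finset.univ.filter fun i => Dominant (P i) a).card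

/-- Number of preferences of `P` in which `a` is dominated. -/
def domdCount {n : ℕ} (P : Fin n → Pref A) (a : A) : ℕ :=
  (Finset.univ.filter fun i => DominatedIn (P i) a).card

/-- `a` is undominated in at least one preference and no alternative is undominated
in strictly more preferences than `a`. -/
def PlurUDTop {n : ℕ} (P : Fin n → Pref A) (a : A) : Prop :=
  0 < udCount P a ∧ ∀ b, udCount P b ≤ udCount P a

/-- `a` is the PlurUD-consensus alternative of `P`. -/
def PlurUDConsensus {n : ℕ} (P : Fin n → Pref A) (a : A) : Prop :=
  PlurUDTop P a ∧ ∀ b, PlurUDTop P b → b = a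

/-- `a` is dominant in at least one preference and no alternative is dominant
in strictly more preferences than `a`. -/
def PlurDomTop {n : ℕ} (P : Fin n → Pref A) (a : A) : Prop :=
  0 < domCount P a ∧ ∀ b, domCount P b ≤ domCount P a

/-- `a` is the PlurDom-consensus alternative of `P`. -/
def PlurDomConsensus {n : ℕ} (P : Fin n → Pref A) (a : A) : Prop :=
  PlurDomTop P a ∧ ∀ b, PlurDomTop P b → b = a

/-- `a` is dominated in at least one preference and no alternative is dominated
in strictly more preferences than `a`. -/
def PlurDomdTop {n : ℕ} (P : Fin n → Pref A) (a : A) : Prop :=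
  0 < domdCount P a ∧ ∀ b, domdCount P b ≤ domdCount P a

/-- `a` is the (unique) plurality dominated alternative of `P`. -/
def PlurDomdConsensus {n : ℕ} (P : Fin n → Pref A) (a : A) : Prop :=
  PlurDomdTop P a ∧ ∀ b, PlurDomdTop P b → b = a

/-- `a` is the MajUD-consensus alternative of `P`: undominated in strictly more than
`n / 2` of the preferences, and the unique alternative with this property. -/
def MajUDConsensus {n : ℕ} (P : Fin n → Pref A) (a : A) : Prop :=
  (n < 2 * udCount P a) ∧ ∀ b, n < 2 * udCount P b → b = a

/-- `a` is the MajDom-consensus alternative of `P`: dominant in strictly more than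
`n / 2` of the preferences (such an alternative is automatically unique). -/
def MajDomConsensus {n : ℕ} (P : Fin n → Pref A) (a : A) : Prop :=
  n < 2 * domCount P a

/-- `a` is the UnanUD-consensus alternative of `P`: undominated in every preference,
and the unique alternative with this property. -/
def UnanUDConsensus {n : ℕ} (P : Fin n → Pref A) (a : A) : Prop :=
  (∀ i, Undominated (P i) a) ∧ ∀ b, (∀ i, Undominated (P i) b) → b = a

/-- `a` is the UnanDom-consensus alternative of `P`: dominant in every preference. -/
def UnanDomConsensus {n : ℕ} (P : Fin n → Pref A) (a : A) : Prop :=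
  ∀ i, Dominant (P i) a

/-- A preference is a strict weak ordering: there is an ordered partition of the
alternatives into levels (given by a level function `f`) such that alternatives in the
same level are incomparable, and `a ≻ b` exactly when `a` is in an earlier level. -/
def IsSWO (pref : Pref A) : Prop :=
  ∃ (k : ℕ) (f : A → Fin k), ∀ a b : A, pref a b ↔ f a < f b

/-!
An agent never retracts a comparison: each step either keeps her preference or enlarges it. So an
alternative that is dominant in some agent's preference stays dominant there, whatever pairs are
discussed and however the majorities fall.
-/

section MajorityDynamics

variable {α : Type} {n : ℕ}

theorem Dominant.mono {r s : Pref α} (hrs : r ≤ s) {a : α} (h : Dominant r a) :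
    Dominant s a :=
  fun b hb => hrs a b (h b hb)

theorem domCount_mono (a : α) : Monotone fun P : Fin n → Pref α => domCount P a := by
  intro P Q hPQ
  refine Finset.card_le_card (Finset.monotone_filter_right _ fun i _ hi => ?_)
  exact hi.mono (hPQ i)

theorem MajDomConsensus.mono {P Q : Fin n → Pref α} (hPQ : P ≤ Q) {a : α}
    (ha : MajDomConsensus P a) : MajDomConsensus Q a :=
  ha.trans_le (Nat.mul_le_mul_left 2 (domCount_mono a hPQ))

theorem le_mdStep (P : Fin n → Pref α) (p : α × α) : P ≤ mdStep P p := by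
  intro i x y hxy
  unfold mdStep
  split_ifs
  · exact hxy
  · exact .single (.inl hxy)
  · exact .single (.inl hxy)

theorem le_MD (σ : List (α × α)) (P : Fin n → Pref α) : P ≤ MD σ P := by
  induction σ generalizing P with
  | nil => exact le_rfl
  | cons p σ ih => exact (le_mdStep P p).trans (ih (mdStep P p))

theorem stmt_8_general (P : Fin n → Pref α) (a : α) (ha : MajDomConsensus P a)
    (σ : List (α × α)) : MajDomConsensus (MD σ P) a :=
  ha.mono (le_MD σ P)

end MajorityDynamics

/-- Majority dynamics preserves MajDom-consensus identity. -/
theorem stmt_8 {n : ℕ} (P : Fin n → Pref A) (hP : ∀ i, IsPref (P i))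
    (a : A) (ha : MajDomConsensus P a)
    (σ : List (A × A)) (hσ : IsUpdateOrder σ) :
    MajDomConsensus (MD σ P) a :=
  stmt_8_general P a ha σ

end
end

section
/- For every m ≥ 8 there exist a profile P over m alternatives in which some alternative w is the PlurDom-consensus alternative and some alternative ℓ ≠ w is the plurality dominated alternative, and an update order σ, such that ℓ is the PlurDom-consensus alternative of MD_σ(P). -/
attribute [local instance] Classical.propDecidable

noncomputable section

variable {A : Type} [Fintype A] [DecidableEq A]

/-!
A plurality dominated alternative may still lose no pairwise majority comparison. Discussing a pair
`(l, b)` in which `l` is not behind never ranks anything new above `l`. Hence a weak Condorcet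
winner `l` remains one while it is discussed against everybody else, and every agent for whom `l`
was undominated ends up with `l` dominant, which later discussions cannot undo. It therefore
suffices that `l` is a weak Condorcet winner, undominated for two of three agents, but not yet
dominant for either of them.
-/

section AdjoinPair

variable {α : Type} {r : Pref α} {a b x y : α}

/-- The transitive closure of the preference `r` with the comparison `a ≻ b` added: what an agent
without an opinion on `a` and `b` does when told that `a` beats `b`. -/
def adjoinPair (r : Pref α) (a b : α) : Pref α :=
  Relation.TransGen fun x y => r x y ∨ (x = a ∧ y = b)

theorem adjoinPair_of_rel (h : r x y) : adjoinPair r a b x y :=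
  .single (.inl h)

theorem adjoinPair_self : adjoinPair r a b a b :=
  .single (.inr ⟨rfl, rfl⟩)

theorem adjoinPair_iff (hr : ∀ ⦃x y z⦄, r x y → r y z → r x z) :
    adjoinPair r a b x y ↔ r x y ∨ (x = a ∨ r x a) ∧ (y = b ∨ r b y) := by
  constructor
  · intro h
    induction h with
    | single h => exact h.imp_right fun ⟨hx, hy⟩ => ⟨.inl hx, .inl hy⟩
    | tail _ hyz ih =>
      rcases hyz with hyz | ⟨rfl, rfl⟩
      · rcases ih with hxy | ⟨hxa, rfl | hby⟩
        · exact .inl (hr hxy hyz)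
        · exact .inr ⟨hxa, .inr hyz⟩
        · exact .inr ⟨hxa, .inr (hr hby hyz)⟩
      · exact .inr ⟨ih.elim .inr And.left, .inl rfl⟩
  · rintro (hxy | ⟨rfl | hxa, rfl | hby⟩)
    · exact adjoinPair_of_rel hxy
    · exact adjoinPair_self
    · exact adjoinPair_self.tail (.inl hby)
    · exact adjoinPair_self.head (.inl hxa)
    · exact (adjoinPair_self.head (.inl hxa)).tail (.inl hby)

theorem IsPref.adjoinPair (hr : IsPref r) (hab : a ≠ b) (hba : ¬ r b a) :
    IsPref (adjoinPair r a b) := by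
  refine ⟨fun x hx => ?_, fun _ _ _ => Relation.TransGen.trans⟩
  rcases (adjoinPair_iff hr.2).1 hx with hxx | ⟨rfl | hxa, rfl | hbx⟩
  · exact hr.1 x hxx
  · exact hab rfl
  · exact hba hbx
  · exact hba hxa
  · exact hba (hr.2 hbx hxa)

end AdjoinPair

section MajorityDynamics

variable {α : Type} {n : ℕ} {P : Fin n → Pref α} {i : Fin n} {a b c x y : α} {p : α × α}

theorem mdStep_of_ranked (h : P i a b ∨ P i b a) : mdStep P (a, b) i = P i :=
  if_pos h

theorem mdStep_of_support_le (h : ¬ (P i a b ∨ P i b a)) (hs : support P b a ≤ support P a b) :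
    mdStep P (a, b) i = adjoinPair (P i) a b :=
  (if_neg h).trans (if_pos hs)

theorem mdStep_of_support_lt (h : ¬ (P i a b ∨ P i b a)) (hs : support P a b < support P b a) :
    mdStep P (a, b) i = adjoinPair (P i) b a :=
  (if_neg h).trans (if_neg hs.not_ge)

theorem mdStep_of_rel (h : P i x y) : mdStep P p i x y := by
  obtain ⟨a, b⟩ := p
  by_cases hab : P i a b ∨ P i b a
  · rwa [mdStep_of_ranked hab]
  rcases le_or_gt (support P b a) (support P a b) with hs | hs
  · rw [mdStep_of_support_le hab hs]
    exact adjoinPair_of_rel h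
  · rw [mdStep_of_support_lt hab hs]
    exact adjoinPair_of_rel h

theorem isPref_mdStep (hP : IsPref (P i)) (hp : p.1 ≠ p.2) : IsPref (mdStep P p i) := by
  obtain ⟨a, b⟩ := p
  by_cases hab : P i a b ∨ P i b a
  · rwa [mdStep_of_ranked hab]
  rcases le_or_gt (support P b a) (support P a b) with hs | hs
  · rw [mdStep_of_support_le hab hs]
    exact hP.adjoinPair hp fun h => hab (.inr h)
  · rw [mdStep_of_support_lt hab hs]
    exact hP.adjoinPair hp.symm fun h => hab (.inl h)

theorem MD_cons (p : α × α) (σ : List (α × α)) (P : Fin n → Pref α) :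
    MD (p :: σ) P = MD σ (mdStep P p) :=
  List.foldl_cons ..

theorem MD_append (σ τ : List (α × α)) (P : Fin n → Pref α) :
    MD (σ ++ τ) P = MD τ (MD σ P) :=
  List.foldl_append

theorem MD_of_rel (σ : List (α × α)) (h : P i x y) : MD σ P i x y := by
  induction σ generalizing P with
  | nil => exact h
  | cons _ _ ih => exact ih (mdStep_of_rel h)

theorem isPref_MD {σ : List (α × α)} (hσ : ∀ p ∈ σ, p.1 ≠ p.2) (hP : IsPref (P i)) :
    IsPref (MD σ P i) := by
  induction σ generalizing P with
  | nil => exact hP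
  | cons p σ ih =>
    rw [List.forall_mem_cons] at hσ
    exact ih hσ.2 (isPref_mdStep hP hσ.1)

/-- `a` is a weak Condorcet winner in `P`: it loses no pairwise majority comparison. -/
def WeakCondorcetWinner (P : Fin n → Pref α) (a : α) : Prop :=
  ∀ b, support P b a ≤ support P a b

theorem mdStep_rel_left_iff (hP : IsPref (P i)) (hab : a ≠ b)
    (hs : support P b a ≤ support P a b) : mdStep P (a, b) i c a ↔ P i c a := by
  by_cases h : P i a b ∨ P i b a
  · rw [mdStep_of_ranked h]
  · rw [mdStep_of_support_le h hs, adjoinPair_iff hP.2, or_iff_left]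
    exact fun hca => hca.2.elim hab fun hba => h (.inr hba)

theorem mdStep_rel_of_support_le (hs : support P b a ≤ support P a b) :
    P i b a ∨ mdStep P (a, b) i a b := by
  by_cases h : P i a b ∨ P i b a
  · rw [mdStep_of_ranked h]
    exact h.symm
  · rw [mdStep_of_support_le h hs]
    exact .inr adjoinPair_self

theorem WeakCondorcetWinner.mdStep (ha : WeakCondorcetWinner P a) (hP : ∀ i, IsPref (P i))
    (hab : a ≠ b) : WeakCondorcetWinner (mdStep P (a, b)) a := fun c =>
  calc support (_root_.mdStep P (a, b)) c a
      = support P c a := by simp only [support, mdStep_rel_left_iff (hP _) hab (ha b)]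
    _ ≤ support P a c := ha c
    _ ≤ support (_root_.mdStep P (a, b)) a c :=
        Finset.card_le_card (Finset.monotone_filter_right _ fun _ _ => mdStep_of_rel)

theorem WeakCondorcetWinner.rel_or_MD_map_rel (ha : WeakCondorcetWinner P a)
    (hP : ∀ i, IsPref (P i)) {L : List α} (haL : a ∉ L) (hb : b ∈ L) :
    P i b a ∨ MD (L.map (a, ·)) P i a b := by
  induction L generalizing P with
  | nil => cases hb
  | cons c L ih =>
    obtain ⟨hac, haL⟩ : a ≠ c ∧ a ∉ L := by simpa using haL
    rw [List.map_cons, MD_cons]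
    rcases List.mem_cons.1 hb with rfl | hbL
    · exact (mdStep_rel_of_support_le (ha b)).imp_right (MD_of_rel _)
    · rw [← mdStep_rel_left_iff (hP i) hac (ha c)]
      exact ih (ha.mdStep hP hac) (fun j => isPref_mdStep (hP j) hac) haL hbL

theorem WeakCondorcetWinner.udCount_le_domCount_MD (ha : WeakCondorcetWinner P a)
    (hP : ∀ i, IsPref (P i)) {L : List α} (hL : ∀ b, b ∈ L ↔ b ≠ a) (τ : List (α × α)) :
    udCount P a ≤ domCount (MD (L.map (a, ·) ++ τ) P) a := by
  refine Finset.card_le_card (Finset.monotone_filter_right _ fun i _ hi b hb => ?_)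
  rw [MD_append]
  have haL : a ∉ L := fun h => (hL a).1 h rfl
  exact MD_of_rel τ ((ha.rel_or_MD_map_rel hP haL ((hL b).2 hb)).resolve_left (hi b))

theorem WeakCondorcetWinner.majDomConsensus_MD (ha : WeakCondorcetWinner P a)
    (hP : ∀ i, IsPref (P i)) {L : List α} (hL : ∀ b, b ∈ L ↔ b ≠ a) (τ : List (α × α))
    (hmaj : n < 2 * udCount P a) : MajDomConsensus (MD (L.map (a, ·) ++ τ) P) a :=
  hmaj.trans_le (Nat.mul_le_mul_left 2 (ha.udCount_le_domCount_MD hP hL τ))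

end MajorityDynamics

section Consensus

variable {α : Type} {n : ℕ} {P : Fin n → Pref α} {a b : α}

theorem unique_pos_max_of_forall_lt {f : α → ℕ} (hpos : 0 < f a) (hlt : ∀ b, b ≠ a → f b < f a) :
    (0 < f a ∧ ∀ b, f b ≤ f a) ∧ ∀ b, (0 < f b ∧ ∀ c, f c ≤ f b) → b = a := by
  refine ⟨⟨hpos, fun b => ?_⟩, fun b hb => by_contra fun hba => (hlt b hba).not_ge (hb.2 a)⟩
  obtain rfl | hba := eq_or_ne b a
  exacts [le_rfl, (hlt b hba).le]

theorem domCount_add_domCount_le (hP : ∀ i, IsPref (P i)) (hab : a ≠ b) :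
    domCount P a + domCount P b ≤ n := by
  have hdisj : ∀ i, Dominant (P i) a → ¬ Dominant (P i) b := fun i ha hb =>
    (hP i).1 a ((hP i).2 (ha b hab.symm) (hb a hab))
  calc domCount P a + domCount P b
      = (Finset.univ.filter fun i => Dominant (P i) a ∨ Dominant (P i) b).card := by
        rw [Finset.filter_or, Finset.card_union_of_disjoint]
        · rfl
        · exact Finset.disjoint_filter.2 fun i _ => hdisj i
    _ ≤ n := (Finset.card_le_univ _).trans_eq (Fintype.card_fin n)

theorem MajDomConsensus.plurDomConsensus (ha : MajDomConsensus P a) (hP : ∀ i, IsPref (P i)) :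
    PlurDomConsensus P a := by
  unfold MajDomConsensus at ha
  refine unique_pos_max_of_forall_lt (f := domCount P) (by omega) fun b hba => ?_
  have := domCount_add_domCount_le hP hba
  omega

end Consensus

section UpdateOrder

variable {α : Type}

/-- All pairs `(a, b)` with `a` occurring before `b` in the list, in lexicographic order. -/
def orderedPairs : List α → List (α × α)
  | [] => []
  | a :: L => L.map (a, ·) ++ orderedPairs L

theorem ne_of_mem_orderedPairs {L : List α} (hL : L.Nodup) {p : α × α}
    (hp : p ∈ orderedPairs L) : p.1 ≠ p.2 := by
  induction L with
  | nil => cases hp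
  | cons c L ih =>
    obtain ⟨hc, hL⟩ := List.nodup_cons.1 hL
    rcases List.mem_append.1 hp with hp | hp
    · obtain ⟨b, hb, rfl⟩ := List.mem_map.1 hp
      exact fun h : c = b => hc (h ▸ hb)
    · exact ih hL hp

variable [DecidableEq α]

theorem count_map_mk (L : List α) (a b c : α) :
    (L.map (c, ·)).count (a, b) = if a = c then L.count b else 0 := by
  split_ifs with h
  · rw [h, List.count_map_of_injective L _ (Prod.mk_right_injective c)]
  · exact List.count_eq_zero.2 fun hab => by
      obtain ⟨_, _, hd⟩ := List.mem_map.1 hab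
      exact h (congrArg Prod.fst hd).symm

theorem count_orderedPairs {L : List α} (hL : L.Nodup) {a b : α} (hab : a ≠ b) :
    (orderedPairs L).count (a, b) + (orderedPairs L).count (b, a) =
      if a ∈ L ∧ b ∈ L then 1 else 0 := by
  induction L with
  | nil => simp [orderedPairs]
  | cons c L ih =>
    obtain ⟨hc, hL⟩ := List.nodup_cons.1 hL
    simp only [orderedPairs, List.count_append, count_map_mk, hL.count, List.mem_cons]
    have := ih hL
    grind

theorem isUpdateOrder_orderedPairs {L : List α} (hL : L.Nodup) (hmem : ∀ a, a ∈ L) :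
    IsUpdateOrder (orderedPairs L) :=
  ⟨fun _ => ne_of_mem_orderedPairs hL, fun a b hab => by
    rw [count_orderedPairs hL hab, if_pos ⟨hmem a, hmem b⟩]⟩

end UpdateOrder

section Construction

variable {α : Type} {w x l a : α}

theorem card_filter_fin_three (p : Fin 3 → Prop) [DecidablePred p] :
    (Finset.univ.filter p).card =
      (if p 0 then 1 else 0) + (if p 1 then 1 else 0) + (if p 2 then 1 else 0) := by
  rw [Finset.card_filter, Fin.sum_univ_three]

/-- The preference with `w` on top, `l` at the bottom, and no other comparisons. -/
def topBottom (w l : α) : Pref α := fun a b => (a = w ∧ b ≠ w) ∨ (a ≠ l ∧ b = l)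

/-- The preference ranking `l` above every alternative except `x`, with no other comparisons. -/
def aboveAllBut (l x : α) : Pref α := fun a b => a = l ∧ b ≠ l ∧ b ≠ x

theorem isPref_topBottom (hlw : l ≠ w) : IsPref (topBottom w l) := by
  constructor
  · rintro a (⟨haw, hna⟩ | ⟨hna, hal⟩)
    exacts [hna haw, hna hal]
  · rintro a b c (⟨ha, _⟩ | ⟨_, hb⟩) (⟨hb', hc⟩ | ⟨hb', hc⟩)
    · exact .inl ⟨ha, hc⟩
    · exact .inl ⟨ha, hc ▸ hlw⟩
    · exact absurd (hb.symm.trans hb') hlw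
    · exact absurd hb hb'

theorem isPref_aboveAllBut (l x : α) : IsPref (aboveAllBut l x) :=
  ⟨fun _ h => h.2.1 h.1, fun _ _ _ hab hbc => absurd hbc.1 hab.2.1⟩

theorem dominant_topBottom_iff (hlw : l ≠ w) : Dominant (topBottom w l) a ↔ a = w := by
  refine ⟨fun h => by_contra fun haw => ?_, ?_⟩
  · exact (h w (Ne.symm haw)).elim (fun h => haw h.1) fun h => hlw h.2.symm
  · rintro rfl b hb
    exact .inl ⟨rfl, hb⟩

theorem dominatedIn_topBottom_iff (hlw : l ≠ w) : DominatedIn (topBottom w l) a ↔ a = l := by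
  refine ⟨fun h => by_contra fun hal => ?_, ?_⟩
  · exact (h l (Ne.symm hal)).elim (fun h => hlw h.1) fun h => hal h.2
  · rintro rfl b hb
    exact .inr ⟨hb, rfl⟩

theorem undominated_aboveAllBut (l x : α) : Undominated (aboveAllBut l x) l :=
  fun _ h => h.2.1 rfl

theorem not_dominant_aboveAllBut (hxl : x ≠ l) : ¬ Dominant (aboveAllBut l x) a := by
  intro h
  obtain rfl | hal := eq_or_ne a l
  · exact (h x hxl).2.2 rfl
  · exact (h l hal.symm).2.1 rfl

theorem not_dominatedIn_aboveAllBut (hxl : x ≠ l) : ¬ DominatedIn (aboveAllBut l x) a := by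
  intro h
  obtain rfl | hax := eq_or_ne a x
  · exact (h l hxl.symm).2.2 rfl
  · exact hxl (h x hax.symm).1

/-- Three agents: one with `w` on top and `l` at the bottom, and two who rank `l` above everything
except `x`, respectively `w`. Leaving a single comparison open keeps `l` from being dominant in
the last two preferences. -/
def loserProfile (w x l : α) : Fin 3 → Pref α :=
  ![topBottom w l, aboveAllBut l x, aboveAllBut l w]

theorem isPref_loserProfile (hlw : l ≠ w) (i : Fin 3) : IsPref (loserProfile w x l i) := by
  fin_cases i
  exacts [isPref_topBottom hlw, isPref_aboveAllBut l x, isPref_aboveAllBut l w]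

theorem domCount_loserProfile (hlw : l ≠ w) (hxl : x ≠ l) (a : α) :
    domCount (loserProfile w x l) a = if a = w then 1 else 0 := by
  rw [domCount, card_filter_fin_three]
  simp [loserProfile,
    dominant_topBottom_iff hlw, not_dominant_aboveAllBut hxl, not_dominant_aboveAllBut hlw.symm]

theorem domdCount_loserProfile (hlw : l ≠ w) (hxl : x ≠ l) (a : α) :
    domdCount (loserProfile w x l) a = if a = l then 1 else 0 := by
  rw [domdCount, card_filter_fin_three]
  simp [loserProfile,
    dominatedIn_topBottom_iff hlw, not_dominatedIn_aboveAllBut hxl,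
    not_dominatedIn_aboveAllBut hlw.symm]

theorem plurDomConsensus_loserProfile (hlw : l ≠ w) (hxl : x ≠ l) :
    PlurDomConsensus (loserProfile w x l) w :=
  unique_pos_max_of_forall_lt (by simp [domCount_loserProfile hlw hxl])
    fun b hb => by simp [domCount_loserProfile hlw hxl, hb]

theorem plurDomdConsensus_loserProfile (hlw : l ≠ w) (hxl : x ≠ l) :
    PlurDomdConsensus (loserProfile w x l) l :=
  unique_pos_max_of_forall_lt (by simp [domdCount_loserProfile hlw hxl])
    fun b hb => by simp [domdCount_loserProfile hlw hxl, hb]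

theorem two_le_udCount_loserProfile (w x l : α) : 2 ≤ udCount (loserProfile w x l) l := by
  rw [udCount, card_filter_fin_three]
  simp [loserProfile, undominated_aboveAllBut]

theorem weakCondorcetWinner_loserProfile (hxw : x ≠ w) :
    WeakCondorcetWinner (loserProfile w x l) l := by
  intro b
  obtain rfl | hbl := eq_or_ne b l
  · rfl
  calc support (loserProfile w x l) b l
      ≤ 1 := by
        rw [support, card_filter_fin_three]
        simp [loserProfile, topBottom, aboveAllBut, hbl]
    _ ≤ support (loserProfile w x l) l b := by
        refine Finset.card_pos.2 ?_
        obtain rfl | hbx := eq_or_ne b x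
        · exact ⟨2, Finset.mem_filter.2 ⟨Finset.mem_univ _, rfl, hbl, hxw⟩⟩
        · exact ⟨1, Finset.mem_filter.2 ⟨Finset.mem_univ _, rfl, hbl, hbx⟩⟩

end Construction

theorem stmt_10_general {α : Type} [Fintype α] [DecidableEq α] (hα : 3 ≤ Fintype.card α)
    {w l : α} (hlw : l ≠ w) :
    ∃ (P : Fin 3 → Pref α) (σ : List (α × α)),
      (∀ i, IsPref (P i)) ∧ PlurDomConsensus P w ∧ PlurDomdConsensus P l ∧
      IsUpdateOrder σ ∧ PlurDomConsensus (MD σ P) l := by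
  obtain ⟨x, -, hx⟩ : ∃ x ∈ Finset.univ, x ∉ ({w, l} : Finset α) :=
    Finset.exists_mem_notMem_of_card_lt_card (Finset.card_le_two.trans_lt hα)
  obtain ⟨hxw, hxl⟩ : x ≠ w ∧ x ≠ l := by simpa using hx
  let others := (Finset.univ.erase l).toList
  have mem_others : ∀ b, b ∈ others ↔ b ≠ l := by simp [others]
  have hσ : IsUpdateOrder (orderedPairs (l :: others)) :=
    isUpdateOrder_orderedPairs
      (List.nodup_cons.2 ⟨fun h => (mem_others l).1 h rfl, Finset.nodup_toList _⟩)
      fun a => List.mem_cons.2 ((eq_or_ne a l).imp_right (mem_others a).2)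
  have hP := isPref_loserProfile (x := x) hlw
  refine ⟨loserProfile w x l, orderedPairs (l :: others), hP,
    plurDomConsensus_loserProfile hlw hxl, plurDomdConsensus_loserProfile hlw hxl, hσ, ?_⟩
  have hmaj : MajDomConsensus (MD (orderedPairs (l :: others)) (loserProfile w x l)) l := by
    have hud := two_le_udCount_loserProfile w x l
    exact (weakCondorcetWinner_loserProfile hxw).majDomConsensus_MD hP mem_others
      (orderedPairs others) (by omega)
  exact hmaj.plurDomConsensus fun i => isPref_MD hσ.1 (hP i)

/-- For every `m ≥ 8`, majority dynamics can turn the plurality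
dominated alternative into the PlurDom-consensus alternative. -/
theorem stmt_10 (m : ℕ) (hm : 8 ≤ m) :
    ∃ (n : ℕ) (P : Fin n → Pref (Fin m)) (w l : Fin m) (σ : List (Fin m × Fin m)),
      (∀ i, IsPref (P i)) ∧ PlurDomConsensus P w ∧ l ≠ w ∧ PlurDomdConsensus P l ∧
      IsUpdateOrder σ ∧ PlurDomConsensus (MD σ P) l := by
  have hlw : (⟨0, by omega⟩ : Fin m) ≠ ⟨1, by omega⟩ := by simp
  obtain ⟨P, σ, hP, hw, hl, hσ, hMD⟩ := stmt_10_general (by simpa using by omega) hlw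
  exact ⟨3, P, _, _, σ, hP, hw, hlw, hl, hσ, hMD⟩

end
end
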